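/- Discrete nodal domain theorem: suppose the weighted graph G is connected, and let f ∈ ℝ^n be an eigenvector of the normalized Laplacian L with eigenvalue λ. Then the number of strong nodal domains of f is at most the number of eigenvalues of L (counted with multiplicity) that are not greater than λ, i.e. at most #{m : λ_m ≤ λ}. -/

import Mathlib

open Matrix BigOperators

/-- Adjacency relation of the weighted graph with adjacency matrix `A`:
`i` and `j` are adjacent if they are distinct and `A i j > 0`. -/
def adjRel {n : ℕ} (A : Matrix (Fin n) (Fin n) ℝ) (i j : Fin n) : Prop :=
  i ≠ j ∧ 0 < A i j

/-- Reachability within the subgraph induced by a vertex subset `P`: `j` is reachable from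
`i` along edges all of whose endpoints lie in `P`. -/
def reachIn {n : ℕ} (A : Matrix (Fin n) (Fin n) ℝ) (P : Set (Fin n)) (i j : Fin n) : Prop :=
  Relation.ReflTransGen (fun a b => a ∈ P ∧ b ∈ P ∧ adjRel A a b) i j

/-- `S` is a strong nodal domain of `f : V → ℝ`: a connected component of the subgraph
induced by `{i | f i > 0}` or by `{i | f i < 0}`. -/
def IsStrongNodalDomain {n : ℕ} (A : Matrix (Fin n) (Fin n) ℝ) (f : Fin n → ℝ)
    (S : Set (Fin n)) : Prop :=
  (∃ i, 0 < f i ∧ S = {j | reachIn A {k | 0 < f k} i j}) ∨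
  (∃ i, f i < 0 ∧ S = {j | reachIn A {k | f k < 0} i j})

/-!
Let `L` be symmetric with `L f = μ f`. For every `c : V → ℝ`,
`∑ i, ∑ j, L i j * f i * f j * (c i - c j) ^ 2 = 2 * (μ * ‖c f‖ ^ 2 - ⟨c f, L (c f)⟩)`,
and if `c` is constant on each nodal domain, every nonzero summand on the left joins two vertices
at which the values of `f` do not have the same strict sign, hence is nonnegative when the
off-diagonal entries of `L` are nonpositive. So `L - μ` is negative semidefinite on the space of
all such `c f`, whose dimension is the number of nodal domains; by the law of inertia this is at
most the number of eigenvalues `≤ μ`.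
-/

section Inertia

variable {ι : Type*} [Fintype ι] [DecidableEq ι]

theorem toQuadraticForm'_apply {R : Type*} [CommRing R] (M : Matrix ι ι R) (x : ι → R) :
    M.toQuadraticForm' x = x ⬝ᵥ M *ᵥ x :=
  toLinearMap₂'_apply' M x x

theorem equivalent_weightedSumSquares_of_isUnit_det {R : Type*} [CommRing R] {B : Matrix ι ι R}
    (hB : IsUnit B.det) (w : ι → R) :
    QuadraticMap.Equivalent (Bᵀ * diagonal w * B).toQuadraticForm'
      (QuadraticMap.weightedSumSquares R w) := by
  refine ⟨⟨B.toLinearEquiv' (B.invertibleOfIsUnitDet hB), fun x => ?_⟩⟩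
  calc QuadraticMap.weightedSumSquares R w (B *ᵥ x)
      = (B *ᵥ x) ⬝ᵥ diagonal w *ᵥ (B *ᵥ x) := by
        simp only [QuadraticMap.weightedSumSquares_apply, smul_eq_mul, dotProduct,
          mulVec_diagonal, mul_left_comm]
    _ = (Bᵀ * diagonal w * B).toQuadraticForm' x := by
        rw [toQuadraticForm'_apply, ← mulVec_mulVec, ← mulVec_mulVec, dotProduct_mulVec x,
          vecMul_transpose]

variable {L : Matrix ι ι ℝ} (hL : L.IsHermitian)

theorem sub_smul_one_eq_transpose_mul_diagonal_mul (μ : ℝ) :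
    L - μ • (1 : Matrix ι ι ℝ) = (star hL.eigenvectorUnitary : Matrix ι ι ℝ)ᵀ *
      diagonal (fun m => hL.eigenvalues m - μ) * (star hL.eigenvectorUnitary : Matrix ι ι ℝ) := by
  have htranspose : (star hL.eigenvectorUnitary : Matrix ι ι ℝ)ᵀ = hL.eigenvectorUnitary := by
    rw [star_eq_conjTranspose, conjTranspose_eq_transpose_of_trivial, transpose_transpose]
  have hspectral : hL.eigenvectorUnitary * diagonal hL.eigenvalues *
      (star hL.eigenvectorUnitary : Matrix ι ι ℝ) = L :=
    (hL.spectral_theorem.trans (Unitary.conjStarAlgAut_apply ..)).symm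
  rw [htranspose, ← diagonal_sub, ← smul_one_eq_diagonal, mul_sub, sub_mul, hspectral,
    mul_smul_comm, smul_mul_assoc, mul_one, Unitary.mul_star_self_of_mem hL.eigenvectorUnitary.2]

theorem equivalent_weightedSumSquares_eigenvalues_sub (μ : ℝ) :
    QuadraticMap.Equivalent (L - μ • (1 : Matrix ι ι ℝ)).toQuadraticForm'
      (QuadraticMap.weightedSumSquares ℝ fun m => hL.eigenvalues m - μ) := by
  rw [sub_smul_one_eq_transpose_mul_diagonal_mul hL μ]
  exact equivalent_weightedSumSquares_of_isUnit_det
    (UnitaryGroup.det_isUnit (star hL.eigenvectorUnitary)) _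

theorem finrank_le_card_eigenvalues_le {μ : ℝ} {V : Submodule ℝ (ι → ℝ)}
    (hV : ∀ x ∈ V, x ⬝ᵥ L *ᵥ x ≤ μ * (x ⬝ᵥ x)) :
    Module.finrank ℝ V ≤ (Finset.univ.filter fun m => hL.eigenvalues m ≤ μ).card := by
  have hnonpos (x : ι → ℝ) (hx : x ∈ V) :
      (L - μ • (1 : Matrix ι ι ℝ)).toQuadraticForm' x ≤ 0 := by
    simpa [toQuadraticForm'_apply, sub_mulVec, smul_mulVec] using hV x hx
  have hsigPos : sigPos (L - μ • (1 : Matrix ι ι ℝ)).toQuadraticForm' =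
      (Finset.univ.filter fun m => ¬ hL.eigenvalues m ≤ μ).card := by
    rw [QuadraticForm.sigPos_of_equiv_weightedSumSquares
      (equivalent_weightedSumSquares_eigenvalues_sub hL μ), Set.ncard_eq_toFinset_card']
    simp only [Set.toFinset_ofPred, sub_pos, not_le]
  have hinertia := QuadraticForm.sigPos_add_finrank_le_of_nonpos hnonpos
  have hsplit := Finset.card_filter_add_card_filter_not (s := Finset.univ)
    fun m => hL.eigenvalues m ≤ μ
  rw [hsigPos, Module.finrank_fintype_fun_eq_card, ← Finset.card_univ] at hinertia
  omega

end Inertia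

section EigenvectorMultiples

variable {ι κ R : Type*} [CommRing R]

theorem sum_mul_sub_sq_eq_of_mulVec_eq_smul [Fintype ι] {L : Matrix ι ι R} (hL : L.IsSymm) {μ : R}
    {f : ι → R} (hf : L *ᵥ f = μ • f) (c : ι → R) :
    ∑ i, ∑ j, L i j * (f i * f j) * (c i - c j) ^ 2 =
      2 * (μ * ((c * f) ⬝ᵥ (c * f)) - (c * f) ⬝ᵥ L *ᵥ (c * f)) := by
  have hcross : ∑ i, ∑ j, L i j * (f i * f j) * (c i * c j) = (c * f) ⬝ᵥ L *ᵥ (c * f) := by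
    simp only [dotProduct, mulVec, Finset.mul_sum, Pi.mul_apply]
    exact Finset.sum_congr rfl fun i _ => Finset.sum_congr rfl fun j _ => by ring
  have hrow (i : ι) : ∑ j, L i j * f j = μ * f i := congrFun hf i
  have hleft : ∑ i, ∑ j, L i j * (f i * f j) * c i ^ 2 = μ * ((c * f) ⬝ᵥ (c * f)) :=
    calc ∑ i, ∑ j, L i j * (f i * f j) * c i ^ 2
        = ∑ i, f i * c i ^ 2 * ∑ j, L i j * f j := by
          simp only [Finset.mul_sum]
          exact Finset.sum_congr rfl fun i _ => Finset.sum_congr rfl fun j _ => by ring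
      _ = μ * ((c * f) ⬝ᵥ (c * f)) := by
          simp only [hrow, dotProduct, Finset.mul_sum, Pi.mul_apply]
          exact Finset.sum_congr rfl fun i _ => by ring
  have hright : ∑ i, ∑ j, L i j * (f i * f j) * c j ^ 2 = μ * ((c * f) ⬝ᵥ (c * f)) := by
    rw [← hleft, Finset.sum_comm]
    exact Finset.sum_congr rfl fun i _ => Finset.sum_congr rfl fun j _ => by
      rw [hL.apply i j, mul_comm (f j)]
  calc ∑ i, ∑ j, L i j * (f i * f j) * (c i - c j) ^ 2
      = ∑ i, ∑ j, L i j * (f i * f j) * c i ^ 2 + ∑ i, ∑ j, L i j * (f i * f j) * c j ^ 2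
          - 2 * ∑ i, ∑ j, L i j * (f i * f j) * (c i * c j) := by
        simp only [Finset.mul_sum, ← Finset.sum_add_distrib, ← Finset.sum_sub_distrib]
        exact Finset.sum_congr rfl fun i _ => Finset.sum_congr rfl fun j _ => by ring
    _ = 2 * (μ * ((c * f) ⬝ᵥ (c * f)) - (c * f) ⬝ᵥ L *ᵥ (c * f)) := by
        rw [hleft, hright, hcross]
        ring

theorem dotProduct_mulVec_mul_le_of_mulVec_eq_smul [Fintype ι] [LinearOrder R]
    [IsStrictOrderedRing R] {L : Matrix ι ι R} (hL : L.IsSymm) {μ : R} {f : ι → R}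
    (hf : L *ᵥ f = μ • f) {c : ι → R} (hc : ∀ i j, c i ≠ c j → 0 ≤ L i j * (f i * f j)) :
    (c * f) ⬝ᵥ L *ᵥ (c * f) ≤ μ * ((c * f) ⬝ᵥ (c * f)) := by
  have hterm (i j : ι) : 0 ≤ L i j * (f i * f j) * (c i - c j) ^ 2 := by
    by_cases hij : c i = c j
    · simp [hij]
    · exact mul_nonneg (hc i j hij) (sq_nonneg _)
  have hsum : 0 ≤ ∑ i, ∑ j, L i j * (f i * f j) * (c i - c j) ^ 2 :=
    Finset.sum_nonneg fun i _ => Finset.sum_nonneg fun j _ => hterm i j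
  rw [sum_mul_sub_sq_eq_of_mulVec_eq_smul hL hf] at hsum
  linarith

/-- The products of `f` with the functions constant on the fibers of `p`, parametrized linearly
and without redundancy: the coefficients are indexed only by the fibers on which `f` does not
vanish identically, and are extended by zero to the other ones. -/
noncomputable def fiberwiseMultiple (p : ι → κ) (f : ι → R) :
    (p '' f.support → R) →ₗ[R] (ι → R) :=
  LinearMap.mulRight R f ∘ₗ LinearMap.funLeft R R p ∘ₗ
    Function.ExtendByZero.linearMap R Subtype.val

theorem fiberwiseMultiple_injective [NoZeroDivisors R] (p : ι → κ) (f : ι → R) :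
    Function.Injective (fiberwiseMultiple p f) := by
  refine (injective_iff_map_eq_zero _).2 fun c hc => funext ?_
  rintro ⟨_, i, hi, rfl⟩
  have hci : Function.extend Subtype.val c 0 (p i) * f i = 0 := congrFun hc i
  rw [Subtype.val_injective.extend_apply c 0 ⟨p i, Set.mem_image_of_mem p hi⟩] at hci
  exact (mul_eq_zero.1 hci).resolve_right hi

theorem ncard_image_support_le_card_eigenvalues_le [Fintype ι] [DecidableEq ι] {L : Matrix ι ι ℝ}
    (hL : L.IsHermitian) {μ : ℝ} {f : ι → ℝ} (hf : L *ᵥ f = μ • f) {p : ι → κ}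
    (hp : ∀ i j, p i ≠ p j → 0 ≤ L i j * (f i * f j)) :
    (p '' f.support).ncard ≤ (Finset.univ.filter fun m => hL.eigenvalues m ≤ μ).card := by
  have hrange : ∀ x ∈ LinearMap.range (fiberwiseMultiple p f), x ⬝ᵥ L *ᵥ x ≤ μ * (x ⬝ᵥ x) := by
    rintro _ ⟨c, rfl⟩
    exact dotProduct_mulVec_mul_le_of_mulVec_eq_smul (isHermitian_iff_isSymm.1 hL) hf
      fun i j hij => hp i j fun h => hij (congrArg (Function.extend Subtype.val c 0) h)
  have : Fintype (p '' f.support) := Fintype.ofFinite _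
  calc (p '' f.support).ncard
      = Module.finrank ℝ (LinearMap.range (fiberwiseMultiple p f)) := by
        rw [LinearMap.finrank_range_of_inj (fiberwiseMultiple_injective p f),
          Module.finrank_fintype_fun_eq_card, ← Nat.card_eq_fintype_card, Nat.card_coe_set_eq]
    _ ≤ (Finset.univ.filter fun m => hL.eigenvalues m ≤ μ).card :=
        finrank_le_card_eigenvalues_le hL hrange

end EigenvectorMultiples

section NodalDomains

variable {n : ℕ} {A : Matrix (Fin n) (Fin n) ℝ} {f : Fin n → ℝ}

/-- The set of vertices joined to `i` by a path along which `f` keeps the strict sign it has at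
`i`. If `f i ≠ 0`, this is the strong nodal domain containing `i`; otherwise it is `{i}`. -/
def signComponent (A : Matrix (Fin n) (Fin n) ℝ) (f : Fin n → ℝ) (i : Fin n) : Set (Fin n) :=
  {j | reachIn A {k | 0 < f i * f k} i j}

theorem setOf_isStrongNodalDomain_eq_image :
    {S | IsStrongNodalDomain A f S} = signComponent A f '' f.support := by
  have hpos {i : Fin n} (hi : 0 < f i) :
      signComponent A f i = {j | reachIn A {k | 0 < f k} i j} := by
    simp only [signComponent, mul_pos_iff_of_pos_left hi]
  have hneg {i : Fin n} (hi : f i < 0) :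
      signComponent A f i = {j | reachIn A {k | f k < 0} i j} := by
    simp only [signComponent, mul_pos_iff, hi, hi.not_gt, true_and, false_and, false_or]
  ext S
  constructor
  · rintro (⟨i, hi, rfl⟩ | ⟨i, hi, rfl⟩)
    · exact ⟨i, hi.ne', hpos hi⟩
    · exact ⟨i, hi.ne, hneg hi⟩
  · rintro ⟨i, hi, rfl⟩
    rcases lt_or_gt_of_ne hi with hi | hi
    · exact .inr ⟨i, hi, hneg hi⟩
    · exact .inl ⟨i, hi, hpos hi⟩

theorem signComponent_eq_of_adjRel {i j : Fin n} (hij : adjRel A i j) (hji : adjRel A j i)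
    (hf : 0 < f i * f j) : signComponent A f i = signComponent A f j := by
  have hsign : {k | 0 < f i * f k} = {k | 0 < f j * f k} := by
    ext k
    rcases mul_pos_iff.1 hf with ⟨hi, hj⟩ | ⟨hi, hj⟩
    · simp only [Set.mem_ofPred_eq, mul_pos_iff_of_pos_left hi, mul_pos_iff_of_pos_left hj]
    · simp only [Set.mem_ofPred_eq, mul_pos_iff, hi, hi.not_gt, hj, hj.not_gt]
  have hi : i ∈ {k | 0 < f j * f k} := by rwa [Set.mem_ofPred_eq, mul_comm]
  have hj : j ∈ {k | 0 < f j * f k} := hsign ▸ hf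
  ext k
  rw [signComponent, signComponent, hsign]
  exact ⟨.head ⟨hj, hi, hji⟩, .head ⟨hi, hj, hij⟩⟩

theorem discrete_nodal_domain_theorem_general {L : Matrix (Fin n) (Fin n) ℝ} (hL : L.IsHermitian)
    (hoff : ∀ i j, i ≠ j → L i j ≤ 0) (hadj : ∀ i j, i ≠ j → L i j < 0 → 0 < A i j) {lam : ℝ}
    (heig : L *ᵥ f = lam • f) :
    Set.ncard {S : Set (Fin n) | IsStrongNodalDomain A f S} ≤
      (Finset.univ.filter fun m => hL.eigenvalues m ≤ lam).card := by
  rw [setOf_isStrongNodalDomain_eq_image]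
  refine ncard_image_support_le_card_eigenvalues_le hL heig fun i j hne => ?_
  by_contra! hneg
  have hij : i ≠ j := fun h => hne (congrArg _ h)
  obtain ⟨hLpos, -⟩ | ⟨hLneg, hf⟩ := mul_neg_iff.1 hneg
  · exact (hoff i j hij).not_gt hLpos
  · have hLneg' : L j i < 0 := by rwa [(isHermitian_iff_isSymm.1 hL).apply i j]
    exact hne (signComponent_eq_of_adjRel ⟨hij, hadj i j hij hLneg⟩
      ⟨hij.symm, hadj j i hij.symm hLneg'⟩ hf)

end NodalDomains

section NormalizedLaplacian

variable {ι R : Type*} [Fintype ι] [DecidableEq ι]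

/-- The Laplacian `I - W A W` of the weight matrix `A`, where `W` is the diagonal matrix with
entries `w`. The usual normalized Laplacian is the case `w i = d i ^ (-1 / 2)`. -/
def normalizedLaplacian [Ring R] (w : ι → R) (A : Matrix ι ι R) : Matrix ι ι R :=
  1 - diagonal w * A * diagonal w

theorem normalizedLaplacian_apply_of_ne [Ring R] (w : ι → R) (A : Matrix ι ι R) {i j : ι}
    (hij : i ≠ j) : normalizedLaplacian w A i j = -(w i * A i j * w j) := by
  rw [normalizedLaplacian, Matrix.sub_apply, one_apply_ne hij, mul_diagonal, diagonal_mul, zero_sub]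

variable [Ring R] [LinearOrder R] [IsStrictOrderedRing R] {w : ι → R} (hw : ∀ i, 0 ≤ w i)
  {A : Matrix ι ι R} {i j : ι}

include hw

theorem normalizedLaplacian_nonpos (hA : ∀ i j, 0 ≤ A i j) (hij : i ≠ j) :
    normalizedLaplacian w A i j ≤ 0 := by
  rw [normalizedLaplacian_apply_of_ne w A hij, neg_nonpos]
  exact mul_nonneg (mul_nonneg (hw i) (hA i j)) (hw j)

theorem pos_of_normalizedLaplacian_neg (hij : i ≠ j) (hneg : normalizedLaplacian w A i j < 0) :
    0 < A i j := by
  rw [normalizedLaplacian_apply_of_ne w A hij, neg_lt_zero] at hneg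
  exact pos_of_mul_pos_right (pos_of_mul_pos_left hneg (hw j)) (hw i)

end NormalizedLaplacian

/-- **Discrete nodal domain theorem.** If the weighted graph `G` is connected
and `f` is an eigenvector of the normalized Laplacian `L` with eigenvalue `λ`, then the
number of strong nodal domains of `f` is at most the number of eigenvalues of `L`
(counted with multiplicity) that are not greater than `λ`. -/
theorem discrete_nodal_domain_theorem
    (n : ℕ) (hn : 1 ≤ n) (A : Matrix (Fin n) (Fin n) ℝ)
    (hsymm : A.IsSymm) (hnonneg : ∀ i j, 0 ≤ A i j)
    (d : Fin n → ℝ) (hd : ∀ i, d i = ∑ j, A i j) (hdpos : ∀ i, 0 < d i)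
    (L : Matrix (Fin n) (Fin n) ℝ)
    (hLdef : L = 1 - (Matrix.diagonal fun i => (Real.sqrt (d i))⁻¹) * A *
      (Matrix.diagonal fun i => (Real.sqrt (d i))⁻¹))
    (hL : L.IsHermitian)
    (hconn : ∀ i j : Fin n, Relation.ReflTransGen (adjRel A) i j)
    (lam : ℝ) (f : Fin n → ℝ) (hf : f ≠ 0) (heig : L *ᵥ f = lam • f) :
    Set.ncard {S : Set (Fin n) | IsStrongNodalDomain A f S} ≤
      (Finset.univ.filter fun m => hL.eigenvalues m ≤ lam).card := by
  subst hLdef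
  have hw (i : Fin n) : 0 ≤ (√(d i))⁻¹ := inv_nonneg.2 (Real.sqrt_nonneg _)
  exact discrete_nodal_domain_theorem_general hL (fun _ _ => normalizedLaplacian_nonpos hw hnonneg)
    (fun _ _ => pos_of_normalizedLaplacian_neg hw) heig
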